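/- arXiv:2309.10370 — 2 statements merged into one kernel-verified Lean document; each statement's English description precedes it below -/
import Mathlib

section
/- Assume M = Q and X̄₀^red ∈ ℝ^{Q×Q} is invertible (so X₀𝒩⁻¹X₀ᵀ is invertible). Then the matrix W₂ := Y·(X̄₀^red)ᵀ·(X₀𝒩⁻¹X₀ᵀ)⁻¹ ∈ ℝ^{Q×Q} satisfies W₂·X₀ = Y^ext·𝒫, where 𝒫 := 𝒩⁻¹X₀ᵀ(X₀𝒩⁻¹X₀ᵀ)⁻¹X₀; equivalently, W₂X₀ − Y^ext = −Y^ext·𝒫^⊥ with 𝒫^⊥ := 1 − 𝒫. -/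
open Matrix

noncomputable section

/-- Index type for training inputs: class `j ∈ {1,…,Q}` and sample `i ∈ {1,…,N_j}`. -/
abbrev Idx (Q : ℕ) (Nc : Fin Q → ℕ) : Type := (j : Fin Q) × Fin (Nc j)

/-- The matrix `X̄₀^red ∈ ℝ^{M×Q}` of class means `x̄_{0,j} = (1/N_j)·Σ_i x_{0,j,i}`. -/
def classMeans {Q M : ℕ} (Nc : Fin Q → ℕ) (X : Matrix (Fin M) (Idx Q Nc) ℝ) :
    Matrix (Fin M) (Fin Q) ℝ :=
  Matrix.of fun m j => (Nc j : ℝ)⁻¹ * ∑ i : Fin (Nc j), X m ⟨j, i⟩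

/-- The matrix `X̄₀ ∈ ℝ^{M×N}` with column `x̄_{0,j}` at each position of class `j`. -/
def barX {Q M : ℕ} (Nc : Fin Q → ℕ) (X : Matrix (Fin M) (Idx Q Nc) ℝ) :
    Matrix (Fin M) (Idx Q Nc) ℝ :=
  Matrix.of fun m p => classMeans Nc X m p.1

/-- The deviation matrix `ΔX₀ := X₀ − X̄₀`. -/
def deltaX {Q M : ℕ} (Nc : Fin Q → ℕ) (X : Matrix (Fin M) (Idx Q Nc) ℝ) :
    Matrix (Fin M) (Idx Q Nc) ℝ := X - barX Nc X

/-- The block-diagonal weight matrix `𝒩 = diag(N_j·1_{N_j×N_j})`. -/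
def calN (Q : ℕ) (Nc : Fin Q → ℕ) : Matrix (Idx Q Nc) (Idx Q Nc) ℝ :=
  Matrix.diagonal fun p => (Nc p.1 : ℝ)

/-- The extended target matrix `Y^ext ∈ ℝ^{Q×N}`: column `y_j` at each position of class `j`. -/
def Yext {Q : ℕ} (Nc : Fin Q → ℕ) (Y : Matrix (Fin Q) (Fin Q) ℝ) :
    Matrix (Fin Q) (Idx Q Nc) ℝ :=
  Matrix.of fun q p => Y q p.1

/-- Entrywise ReLU on matrices: `σ(A)_{kl} = max(0, A_{kl})`. -/
def relu {m n : Type*} (A : Matrix m n ℝ) : Matrix m n ℝ :=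
  Matrix.of fun i j => max 0 (A i j)

/-- Euclidean norm of a vector in `ℝ^k`. -/
def enorm {k : ℕ} (v : Fin k → ℝ) : ℝ := Real.sqrt (∑ i, (v i) ^ 2)

/-- Frobenius (Hilbert–Schmidt) norm `‖B‖_F = √Tr(BBᵀ)`. -/
def frob {m n : Type*} [Fintype m] [Fintype n] (A : Matrix m n ℝ) : ℝ :=
  Real.sqrt (Matrix.trace (A * Aᵀ))

/-- The replicated-bias matrix `b·u_Nᵀ ∈ ℝ^{M×N}`. -/
def colRep {Q M : ℕ} (Nc : Fin Q → ℕ) (b : Fin M → ℝ) : Matrix (Fin M) (Idx Q Nc) ℝ :=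
  Matrix.of fun m _ => b m

/-- The weighted `L²_𝒩` norm `‖A‖ = √Tr(A𝒩⁻¹Aᵀ)`. -/
def l2N {Q M : ℕ} (Nc : Fin Q → ℕ) (A : Matrix (Fin M) (Idx Q Nc) ℝ) : ℝ :=
  Real.sqrt (Matrix.trace (A * (calN Q Nc)⁻¹ * Aᵀ))

/-- `ℓ²→ℓ²` operator norm of a matrix. -/
def opNorm {m n : ℕ} (A : Matrix (Fin m) (Fin n) ℝ) : ℝ :=
  ‖LinearMap.toContinuousLinearMap (Matrix.toEuclideanLin A)‖

/-!
Averaging over class `j` with weights `N_j⁻¹` turns the inputs into their class means, so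
`Y^ext 𝒩⁻¹ X₀ᵀ = Y (X̄₀^red)ᵀ`. Hence `W₂` is the solution of the normal equation
`W (X₀ 𝒩⁻¹ X₀ᵀ) = Y^ext 𝒩⁻¹ X₀ᵀ`, which is equivalent to `W X₀ = Y^ext 𝒫`. The Gram matrix
`X₀ 𝒩⁻¹ X₀ᵀ` is positive definite because `X̄₀^red` has the form `X₀ C`: a row vector
annihilating `X₀` also annihilates the invertible matrix `X̄₀^red`.
-/

/-- The projection onto the range of `B` along the kernel of `X`, when `X * B` is invertible.
The projection `𝒫` of the paper is the case `X = X₀`, `B = 𝒩⁻¹X₀ᵀ`. -/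
def obliqueProj {R m n : Type*} [CommRing R] [Fintype m] [DecidableEq m] [Fintype n]
    (X : Matrix m n R) (B : Matrix n m R) : Matrix n n R :=
  B * (X * B)⁻¹ * X

section ObliqueProjection

variable {R k m n : Type*} [CommRing R] [Fintype m] [DecidableEq m] [Fintype n]
  {X : Matrix m n R} {B : Matrix n m R}

theorem obliqueProj_mul_right (hXB : IsUnit (X * B)) : obliqueProj X B * B = B := by
  rw [obliqueProj, Matrix.mul_assoc,
    nonsing_inv_mul_cancel_right _ _ ((isUnit_iff_isUnit_det _).mp hXB)]

/-- Right multiplication by `B` turns the equation `W * X = T * obliqueProj X B` into the normal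
equation `W * (X * B) = T * B`. -/
theorem mul_eq_mul_obliqueProj_iff (hXB : IsUnit (X * B)) (T : Matrix k n R) (W : Matrix k m R) :
    W * X = T * obliqueProj X B ↔ W = T * B * (X * B)⁻¹ := by
  constructor
  · intro hW
    have normal_eq : W * (X * B) = T * B := by
      rw [← Matrix.mul_assoc, hW, Matrix.mul_assoc, obliqueProj_mul_right hXB]
    rw [← normal_eq, mul_nonsing_inv_cancel_right _ _ ((isUnit_iff_isUnit_det _).mp hXB)]
  · rintro rfl
    simp only [obliqueProj, Matrix.mul_assoc]

end ObliqueProjection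

section ClassMeans

variable {Q M : ℕ} (Nc : Fin Q → ℕ)

theorem calN_inv : (calN Q Nc)⁻¹ = diagonal fun p => (Nc p.1 : ℝ)⁻¹ := by
  refine inv_eq_right_inv ?_
  rw [calN, diagonal_mul_diagonal, ← diagonal_one]
  congr 1
  funext p
  exact mul_inv_cancel₀ (Nat.cast_ne_zero.mpr p.2.pos.ne')

theorem posDef_calN_inv : (calN Q Nc)⁻¹.PosDef := by
  rw [calN_inv]
  exact PosDef.diagonal fun p => inv_pos.mpr (Nat.cast_pos.mpr p.2.pos)

theorem Yext_mul_calN_inv_mul_transpose (X : Matrix (Fin M) (Idx Q Nc) ℝ)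
    (Y : Matrix (Fin Q) (Fin Q) ℝ) :
    Yext Nc Y * ((calN Q Nc)⁻¹ * Xᵀ) = Y * (classMeans Nc X)ᵀ := by
  ext q m
  rw [calN_inv, mul_apply, mul_apply]
  simp only [diagonal_mul, transpose_apply, Yext, classMeans, of_apply,
    Fintype.sum_sigma, Finset.mul_sum]

/-- `Yext Nc 1` is the class indicator matrix. -/
theorem classMeans_eq_mul (X : Matrix (Fin M) (Idx Q Nc) ℝ) :
    classMeans Nc X = X * ((calN Q Nc)⁻¹ * (Yext Nc 1)ᵀ) := by
  rw [← transpose_inj, ← Matrix.one_mul (classMeans Nc X)ᵀ, ← Yext_mul_calN_inv_mul_transpose]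
  simp only [transpose_mul, transpose_transpose, calN_inv, diagonal_transpose, Matrix.mul_assoc]

variable {Nc} {X : Matrix (Fin M) (Idx Q Nc) ℝ}

theorem vecMul_injective_of_classMeans (hX : Function.Injective (classMeans Nc X).vecMul) :
    Function.Injective X.vecMul := by
  intro v w hvw
  apply hX
  simp only [classMeans_eq_mul, ← vecMul_vecMul, hvw]

theorem posDef_mul_calN_inv_mul_transpose (hX : Function.Injective X.vecMul) :
    (X * (calN Q Nc)⁻¹ * Xᵀ).PosDef := by
  simpa only [conjTranspose_eq_transpose_of_trivial] using
    (posDef_calN_inv Nc).mul_mul_conjTranspose_same hX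

end ClassMeans

theorem statement11_general {Q M : ℕ} (Nc : Fin Q → ℕ) (_hNc : ∀ j, 0 < Nc j)
    (X₀ : Matrix (Fin M) (Idx Q Nc) ℝ)
    (hgram : IsUnit (X₀ * (calN Q Nc)⁻¹ * X₀ᵀ))
    (Y : Matrix (Fin Q) (Fin Q) ℝ) (W : Matrix (Fin Q) (Fin M) ℝ) :
    W * X₀ = Yext Nc Y * ((calN Q Nc)⁻¹ * X₀ᵀ * (X₀ * (calN Q Nc)⁻¹ * X₀ᵀ)⁻¹ * X₀) ↔
      W = Y * (classMeans Nc X₀)ᵀ * (X₀ * (calN Q Nc)⁻¹ * X₀ᵀ)⁻¹ := by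
  rw [Matrix.mul_assoc X₀] at hgram ⊢
  rw [← Yext_mul_calN_inv_mul_transpose]
  exact mul_eq_mul_obliqueProj_iff hgram (Yext Nc Y) W

/-- For `M = Q` with `X̄₀^red` invertible,
`W₂ := Y(X̄₀^red)ᵀ(X₀𝒩⁻¹X₀ᵀ)⁻¹` satisfies `W₂X₀ = Y^ext𝒫`, i.e.
`W₂X₀ − Y^ext = −Y^ext𝒫^⊥` with `𝒫 := 𝒩⁻¹X₀ᵀ(X₀𝒩⁻¹X₀ᵀ)⁻¹X₀` and `𝒫^⊥ := 1 − 𝒫`. -/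
theorem statement11 {Q : ℕ} (Nc : Fin Q → ℕ) (hNc : ∀ j, 0 < Nc j)
    (X₀ : Matrix (Fin Q) (Idx Q Nc) ℝ)
    (hred : IsUnit (classMeans Nc X₀))
    (Y : Matrix (Fin Q) (Fin Q) ℝ) :
    (Y * (classMeans Nc X₀)ᵀ * (X₀ * (calN Q Nc)⁻¹ * X₀ᵀ)⁻¹) * X₀ =
      Yext Nc Y * ((calN Q Nc)⁻¹ * X₀ᵀ * (X₀ * (calN Q Nc)⁻¹ * X₀ᵀ)⁻¹ * X₀) ∧
    (Y * (classMeans Nc X₀)ᵀ * (X₀ * (calN Q Nc)⁻¹ * X₀ᵀ)⁻¹) * X₀ - Yext Nc Y =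
      -(Yext Nc Y *
        (1 - (calN Q Nc)⁻¹ * X₀ᵀ * (X₀ * (calN Q Nc)⁻¹ * X₀ᵀ)⁻¹ * X₀)) := by
  have hgram : IsUnit (X₀ * (calN Q Nc)⁻¹ * X₀ᵀ) :=
    (posDef_mul_calN_inv_mul_transpose
      (vecMul_injective_of_classMeans (vecMul_injective_of_isUnit hred))).isUnit
  have hW := (statement11_general Nc hNc X₀ hgram Y _).mpr rfl
  exact ⟨hW, by rw [hW, Matrix.mul_sub, Matrix.mul_one, neg_sub]⟩
end
end

section
/- Assume M = Q and X̄₀^red ∈ ℝ^{Q×Q} is invertible. Set Δ₁^rel := (X̄₀^red)⁻¹ΔX₀ and Δ₂^rel := Δ₁^rel·𝒩⁻¹·(Δ₁^rel)ᵀ ∈ ℝ^{Q×Q} (a positive semidefinite symmetric matrix, so 1 + Δ₂^rel is invertible). Then ‖Y^ext·𝒫^⊥‖²_{L²_𝒩} = Tr( Y·Δ₂^rel·(1 + Δ₂^rel)⁻¹·Yᵀ ). -/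
open Matrix

noncomputable section

/-- `Δ₁^rel := (X̄₀^red)⁻¹ · ΔX₀`. -/
def Del1 {Q : ℕ} (Nc : Fin Q → ℕ) (X₀ : Matrix (Fin Q) (Idx Q Nc) ℝ) :
    Matrix (Fin Q) (Idx Q Nc) ℝ :=
  (classMeans Nc X₀)⁻¹ * deltaX Nc X₀

/-- `Δ₂^rel := Δ₁^rel · 𝒩⁻¹ · (Δ₁^rel)ᵀ`. -/
def Del2 {Q : ℕ} (Nc : Fin Q → ℕ) (X₀ : Matrix (Fin Q) (Idx Q Nc) ℝ) :
    Matrix (Fin Q) (Fin Q) ℝ :=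
  Del1 Nc X₀ * (calN Q Nc)⁻¹ * (Del1 Nc X₀)ᵀ

/-- The projector `𝒫 := 𝒩⁻¹X₀ᵀ(X₀𝒩⁻¹X₀ᵀ)⁻¹X₀`. -/
def Pmat {Q M : ℕ} (Nc : Fin Q → ℕ) (X₀ : Matrix (Fin M) (Idx Q Nc) ℝ) :
    Matrix (Idx Q Nc) (Idx Q Nc) ℝ :=
  (calN Q Nc)⁻¹ * X₀ᵀ * (X₀ * (calN Q Nc)⁻¹ * X₀ᵀ)⁻¹ * X₀

/-! Let `W = 𝒩⁻¹`, `E` the class indicator matrix, `D = Δ₁^rel` and `C = X̄₀^red`, so that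
`Y^ext = Y E`. Since `A W Eᵀ` is the matrix of class means of `A`, the rows of `E` are
`W`-orthonormal, and they are `W`-orthogonal to those of `D`. Now `X₀ = C (E + D)`, and the
projector only depends on the row space, so the invertible factor `C` may be dropped. Hence `E + D`
has Gram matrix `1 + Δ₂^rel` and inner products `E W (E + D)ᵀ = 1` with `E`, so by Pythagoras the
part of `E` orthogonal to it has Gram matrix `1 - (1 + Δ₂^rel)⁻¹ = Δ₂^rel (1 + Δ₂^rel)⁻¹`. -/

section WeightedProjection

variable {R m n ι : Type*} [CommRing R] [Fintype n] [DecidableEq n] [Fintype ι]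

/-- The projector onto the row space of `X`, orthogonal for the bilinear form `(u, v) ↦ u W vᵀ`.
It acts on row vectors, that is, by multiplication on the right, and is meaningful when the Gram
matrix `X W Xᵀ` is invertible. -/
def weightedProj (W : Matrix ι ι R) (X : Matrix n ι R) : Matrix ι ι R :=
  W * Xᵀ * (X * W * Xᵀ)⁻¹ * X

variable {W : Matrix ι ι R}

lemma weightedProj_mul_left {C : Matrix n n R} (hC : IsUnit C.det) (X : Matrix n ι R) :
    weightedProj W (C * X) = weightedProj W X := by
  have hCt : IsUnit Cᵀ.det := by rwa [det_transpose]
  have hgram : C * X * W * (C * X)ᵀ = C * (X * W * Xᵀ) * Cᵀ := by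
    simp only [transpose_mul, Matrix.mul_assoc]
  rw [weightedProj, hgram, weightedProj, transpose_mul, Matrix.mul_inv_rev, Matrix.mul_inv_rev]
  simp only [Matrix.mul_assoc]
  rw [mul_nonsing_inv_cancel_left _ _ hCt, nonsing_inv_mul_cancel_left _ _ hC]

lemma isIdempotentElem_weightedProj {X : Matrix n ι R} (hX : IsUnit (X * W * Xᵀ).det) :
    IsIdempotentElem (weightedProj W X) :=
  calc weightedProj W X * weightedProj W X
      = W * Xᵀ * ((X * W * Xᵀ)⁻¹ * (X * W * Xᵀ)) * (X * W * Xᵀ)⁻¹ * X := by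
        simp only [weightedProj, Matrix.mul_assoc]
    _ = weightedProj W X := by rw [nonsing_inv_mul _ hX, Matrix.mul_one, weightedProj]

lemma weightedProj_mul_weight (hW : W.IsSymm) (X : Matrix n ι R) :
    weightedProj W X * W = W * (weightedProj W X)ᵀ := by
  simp only [weightedProj, transpose_mul, transpose_nonsing_inv, transpose_transpose, hW.eq,
    Matrix.mul_assoc]

lemma gram_mul_one_sub_weightedProj [DecidableEq ι] (hW : W.IsSymm) {X : Matrix n ι R}
    (hX : IsUnit (X * W * Xᵀ).det) (A : Matrix m ι R) :
    A * (1 - weightedProj W X) * W * (A * (1 - weightedProj W X))ᵀ =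
      A * W * Aᵀ - A * W * Xᵀ * (X * W * Xᵀ)⁻¹ * (X * W * Aᵀ) := by
  have hadj : W * (1 - weightedProj W X)ᵀ = (1 - weightedProj W X) * W := by
    rw [transpose_sub, transpose_one, Matrix.mul_sub, Matrix.sub_mul, weightedProj_mul_weight hW,
      Matrix.mul_one, Matrix.one_mul]
  calc A * (1 - weightedProj W X) * W * (A * (1 - weightedProj W X))ᵀ
      = A * ((1 - weightedProj W X) * (W * (1 - weightedProj W X)ᵀ)) * Aᵀ := by
        simp only [transpose_mul, Matrix.mul_assoc]
    _ = A * ((1 - weightedProj W X) * W) * Aᵀ := by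
        rw [hadj, ← Matrix.mul_assoc (1 - _), (isIdempotentElem_weightedProj hX).one_sub.eq]
    _ = A * W * Aᵀ - A * W * Xᵀ * (X * W * Xᵀ)⁻¹ * (X * W * Aᵀ) := by
        simp only [weightedProj, Matrix.sub_mul, Matrix.mul_sub, Matrix.one_mul, Matrix.mul_assoc]

lemma gram_mul_one_sub_weightedProj_add_of_orthogonal [DecidableEq ι] (hW : W.IsSymm)
    {E D : Matrix n ι R} (hE : E * W * Eᵀ = 1) (hDE : D * W * Eᵀ = 0)
    (hD : IsUnit (1 + D * W * Dᵀ).det) :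
    E * (1 - weightedProj W (E + D)) * W * (E * (1 - weightedProj W (E + D)))ᵀ =
      D * W * Dᵀ * (1 + D * W * Dᵀ)⁻¹ := by
  have hED : E * W * Dᵀ = 0 := by
    simpa only [transpose_mul, transpose_transpose, hW.eq, transpose_zero, Matrix.mul_assoc]
      using congrArg transpose hDE
  have hleft : E * W * (E + D)ᵀ = 1 := by
    rw [transpose_add, Matrix.mul_add, hE, hED, add_zero]
  have hright : (E + D) * W * Eᵀ = 1 := by
    rw [Matrix.add_mul, Matrix.add_mul, hE, hDE, add_zero]
  have hgram : (E + D) * W * (E + D)ᵀ = 1 + D * W * Dᵀ := by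
    simp only [transpose_add, Matrix.add_mul, Matrix.mul_add, hE, hED, hDE, add_zero, zero_add]
  rw [gram_mul_one_sub_weightedProj hW (hgram ▸ hD), hE, hleft, hright, hgram, Matrix.one_mul,
    Matrix.mul_one, sub_eq_iff_eq_add, ← add_one_mul, add_comm _ 1, mul_nonsing_inv _ hD]

end WeightedProjection

section ClassMeans

variable {Q K M : ℕ} (Nc : Fin Q → ℕ)

/-- The class indicator matrix: row `j` is the indicator of the samples of class `j`. Multiplying by
it on the right repeats column `j` over class `j`, as in `X̄₀` and `Y^ext`. -/
def classIndicator : Matrix (Fin Q) (Idx Q Nc) ℝ :=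
  Matrix.of fun j p => if j = p.1 then 1 else 0

lemma Yext_eq_mul_classIndicator (Y : Matrix (Fin Q) (Fin Q) ℝ) :
    Yext Nc Y = Y * classIndicator Nc := by
  ext q p
  simp [Yext, classIndicator, mul_apply]

lemma barX_eq_classMeans_mul_classIndicator (X : Matrix (Fin M) (Idx Q Nc) ℝ) :
    barX Nc X = classMeans Nc X * classIndicator Nc := by
  ext q p
  simp [barX, classIndicator, mul_apply]

lemma inv_calN : (calN Q Nc)⁻¹ = diagonal fun p : Idx Q Nc => (Nc p.1 : ℝ)⁻¹ := by
  refine inv_eq_right_inv ?_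
  rw [calN, diagonal_mul_diagonal, ← diagonal_one]
  congr 1
  funext p
  exact mul_inv_cancel₀ (Nat.cast_ne_zero.2 p.2.pos.ne')

lemma mul_inv_calN_mul_transpose_classIndicator (X : Matrix (Fin M) (Idx Q Nc) ℝ) :
    X * (calN Q Nc)⁻¹ * (classIndicator Nc)ᵀ = classMeans Nc X := by
  ext m j
  rw [inv_calN, mul_apply, Fintype.sum_sigma, Finset.sum_eq_single_of_mem j (Finset.mem_univ j)]
  · simp [classIndicator, classMeans, Finset.mul_sum, mul_comm]
  · intro k _ hk
    simp [classIndicator, hk.symm]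

lemma classMeans_mul (A : Matrix (Fin K) (Fin M) ℝ) (X : Matrix (Fin M) (Idx Q Nc) ℝ) :
    classMeans Nc (A * X) = A * classMeans Nc X := by
  simp only [← mul_inv_calN_mul_transpose_classIndicator, Matrix.mul_assoc]

lemma classMeans_sub (X X' : Matrix (Fin M) (Idx Q Nc) ℝ) :
    classMeans Nc (X - X') = classMeans Nc X - classMeans Nc X' := by
  simp only [← mul_inv_calN_mul_transpose_classIndicator, Matrix.sub_mul]

variable {Nc}

lemma classMeans_classIndicator (hNc : ∀ j, 0 < Nc j) :
    classMeans Nc (classIndicator Nc) = 1 := by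
  ext k j
  have hj : (Nc j : ℝ) ≠ 0 := Nat.cast_ne_zero.2 (hNc j).ne'
  obtain rfl | hkj := eq_or_ne k j
  · simp [classMeans, classIndicator, hj]
  · simp [classMeans, classIndicator, hkj]

lemma classMeans_deltaX (hNc : ∀ j, 0 < Nc j) (X : Matrix (Fin M) (Idx Q Nc) ℝ) :
    classMeans Nc (deltaX Nc X) = 0 := by
  rw [deltaX, classMeans_sub, barX_eq_classMeans_mul_classIndicator, classMeans_mul,
    classMeans_classIndicator hNc, Matrix.mul_one, sub_self]

lemma classMeans_Del1 (hNc : ∀ j, 0 < Nc j) (X₀ : Matrix (Fin Q) (Idx Q Nc) ℝ) :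
    classMeans Nc (Del1 Nc X₀) = 0 := by
  rw [Del1, classMeans_mul, classMeans_deltaX hNc, Matrix.mul_zero]

lemma classMeans_mul_classIndicator_add_Del1 {X₀ : Matrix (Fin Q) (Idx Q Nc) ℝ}
    (hred : IsUnit (classMeans Nc X₀).det) :
    classMeans Nc X₀ * (classIndicator Nc + Del1 Nc X₀) = X₀ := by
  rw [Matrix.mul_add, Del1, mul_nonsing_inv_cancel_left _ _ hred,
    ← barX_eq_classMeans_mul_classIndicator, deltaX, add_sub_cancel]

lemma Pmat_eq_weightedProj {X₀ : Matrix (Fin Q) (Idx Q Nc) ℝ}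
    (hred : IsUnit (classMeans Nc X₀).det) :
    Pmat Nc X₀ = weightedProj (calN Q Nc)⁻¹ (classIndicator Nc + Del1 Nc X₀) :=
  calc Pmat Nc X₀
      = weightedProj (calN Q Nc)⁻¹ (classMeans Nc X₀ * (classIndicator Nc + Del1 Nc X₀)) := by
        rw [classMeans_mul_classIndicator_add_Del1 hred, weightedProj, Pmat]
    _ = weightedProj (calN Q Nc)⁻¹ (classIndicator Nc + Del1 Nc X₀) := weightedProj_mul_left hred _

end ClassMeans

section WeightedNorm

variable {Q M : ℕ} (Nc : Fin Q → ℕ)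

lemma posSemidef_mul_inv_calN_mul_transpose (A : Matrix (Fin M) (Idx Q Nc) ℝ) :
    (A * (calN Q Nc)⁻¹ * Aᵀ).PosSemidef := by
  have hweight : ((calN Q Nc)⁻¹).PosSemidef := by
    rw [inv_calN]
    exact PosSemidef.diagonal fun p => by positivity
  simpa only [conjTranspose_eq_transpose_of_trivial] using hweight.mul_mul_conjTranspose_same A

lemma l2N_sq (A : Matrix (Fin M) (Idx Q Nc) ℝ) :
    l2N Nc A ^ 2 = trace (A * (calN Q Nc)⁻¹ * Aᵀ) :=
  Real.sq_sqrt (posSemidef_mul_inv_calN_mul_transpose Nc A).trace_nonneg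

lemma isUnit_det_one_add_Del2 (X₀ : Matrix (Fin Q) (Idx Q Nc) ℝ) :
    IsUnit (1 + Del2 Nc X₀).det :=
  (isUnit_iff_isUnit_det _).1
    (PosDef.one.add_posSemidef (posSemidef_mul_inv_calN_mul_transpose Nc (Del1 Nc X₀))).isUnit

end WeightedNorm

lemma gram_classIndicator_mul_one_sub_Pmat {Q : ℕ} {Nc : Fin Q → ℕ} (hNc : ∀ j, 0 < Nc j)
    {X₀ : Matrix (Fin Q) (Idx Q Nc) ℝ} (hred : IsUnit (classMeans Nc X₀).det) :
    classIndicator Nc * (1 - Pmat Nc X₀) * (calN Q Nc)⁻¹ *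
        (classIndicator Nc * (1 - Pmat Nc X₀))ᵀ =
      Del2 Nc X₀ * (1 + Del2 Nc X₀)⁻¹ := by
  have hsymm : ((calN Q Nc)⁻¹).IsSymm := (isSymm_diagonal _).inv
  have horthonormal : classIndicator Nc * (calN Q Nc)⁻¹ * (classIndicator Nc)ᵀ = 1 := by
    rw [mul_inv_calN_mul_transpose_classIndicator, classMeans_classIndicator hNc]
  have horthogonal : Del1 Nc X₀ * (calN Q Nc)⁻¹ * (classIndicator Nc)ᵀ = 0 := by
    rw [mul_inv_calN_mul_transpose_classIndicator, classMeans_Del1 hNc]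
  rw [Pmat_eq_weightedProj hred]
  exact gram_mul_one_sub_weightedProj_add_of_orthogonal hsymm horthonormal horthogonal
    (isUnit_det_one_add_Del2 Nc X₀)

/-- For `M = Q` with `X̄₀^red` invertible,
`‖Y^ext𝒫^⊥‖²_{L²_𝒩} = Tr(Y·Δ₂^rel·(1 + Δ₂^rel)⁻¹·Yᵀ)`. -/
theorem statement12 {Q : ℕ} (Nc : Fin Q → ℕ) (hNc : ∀ j, 0 < Nc j)
    (X₀ : Matrix (Fin Q) (Idx Q Nc) ℝ)
    (hred : IsUnit (classMeans Nc X₀))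
    (Y : Matrix (Fin Q) (Fin Q) ℝ) :
    (l2N Nc (Yext Nc Y * (1 - Pmat Nc X₀))) ^ 2 =
      Matrix.trace (Y * Del2 Nc X₀ * (1 + Del2 Nc X₀)⁻¹ * Yᵀ) := by
  have hdet : IsUnit (classMeans Nc X₀).det := (isUnit_iff_isUnit_det _).1 hred
  let residual := classIndicator Nc * (1 - Pmat Nc X₀)
  calc l2N Nc (Yext Nc Y * (1 - Pmat Nc X₀)) ^ 2
      = trace (Y * residual * (calN Q Nc)⁻¹ * (Y * residual)ᵀ) := by
        rw [l2N_sq, Yext_eq_mul_classIndicator, Matrix.mul_assoc Y]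
    _ = trace (Y * (residual * (calN Q Nc)⁻¹ * residualᵀ) * Yᵀ) := by
        simp only [transpose_mul, Matrix.mul_assoc]
    _ = trace (Y * Del2 Nc X₀ * (1 + Del2 Nc X₀)⁻¹ * Yᵀ) := by
        rw [gram_classIndicator_mul_one_sub_Pmat hNc hdet, ← Matrix.mul_assoc Y]
end
end
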